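/- Let P0 be an algebraic null hypothesis, i.e. P0 = Δ_{k-1} ∩ {π : g(π) = 0 for all g ∈ G} for a family G of real polynomials in k variables, with ∅ ≠ P0 ≠ Δ_{k-1}, and let PA = Δ_{k-1} \ P0. Then: (i) there exists an NTUB test of P0 of sample size n if and only if there exists a real polynomial β̃ in k variables of total degree at most n that is not identically zero on Δ_{k-1}, vanishes at every point of P0, and satisfies β̃(π) ≥ 0 for all π ∈ PA; (ii) there exists an SUB test of P0 of sample size n if and only if there exists such a β̃ that moreover satisfies β̃(π) > 0 for all π ∈ PA. -/

import Mathlib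

open Finset

/-- The probability simplex on a finite index set `ι`. -/
def probSimplex (ι : Type) [Fintype ι] : Set (ι → ℝ) :=
  {π | (∀ i, 0 ≤ π i) ∧ ∑ i, π i = 1}

/-- Count vectors of sample size `n`: functions `x : ι → ℕ` with `∑ i, x i = n`. -/
def countVecs (ι : Type) [Fintype ι] [DecidableEq ι] (n : ℕ) : Finset (ι → ℕ) :=
  (Fintype.piFinset fun _ : ι => Finset.range (n + 1)).filter fun x => ∑ i, x i = n

/-- A (randomized) test of sample size `n`: values in `[0,1]` on all count vectors. -/
def IsTest (ι : Type) [Fintype ι] [DecidableEq ι] (n : ℕ) (φ : (ι → ℕ) → ℝ) : Prop :=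
  ∀ x ∈ countVecs ι n, 0 ≤ φ x ∧ φ x ≤ 1

/-- The power function of a test. -/
noncomputable def powerFn (ι : Type) [Fintype ι] [DecidableEq ι] (n : ℕ)
    (φ : (ι → ℕ) → ℝ) (π : ι → ℝ) : ℝ :=
  ∑ x ∈ countVecs ι n, φ x * (Nat.multinomial Finset.univ x : ℝ) * ∏ i, π i ^ x i

/-- Unbiasedness relative to the null hypothesis `P0`. -/
def Unbiased (ι : Type) [Fintype ι] [DecidableEq ι] (n : ℕ) (P0 : Set (ι → ℝ))
    (φ : (ι → ℕ) → ℝ) : Prop :=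
  ∀ π0 ∈ P0, ∀ πA ∈ probSimplex ι \ P0, powerFn ι n φ π0 ≤ powerFn ι n φ πA

/-- Non-trivial unbiased test: unbiased with non-constant power on the simplex. -/
def IsNTUB (ι : Type) [Fintype ι] [DecidableEq ι] (n : ℕ) (P0 : Set (ι → ℝ))
    (φ : (ι → ℕ) → ℝ) : Prop :=
  Unbiased ι n P0 φ ∧
    ∃ π ∈ probSimplex ι, ∃ π' ∈ probSimplex ι, powerFn ι n φ π ≠ powerFn ι n φ π'

/-- Strictly unbiased test. -/
def IsSUB (ι : Type) [Fintype ι] [DecidableEq ι] (n : ℕ) (P0 : Set (ι → ℝ))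
    (φ : (ι → ℕ) → ℝ) : Prop :=
  ∀ π0 ∈ P0, ∀ πA ∈ probSimplex ι \ P0, powerFn ι n φ π0 < powerFn ι n φ πA

/-- Level-`α` test. -/
def IsLevel (ι : Type) [Fintype ι] [DecidableEq ι] (n : ℕ) (P0 : Set (ι → ℝ)) (α : ℝ)
    (φ : (ι → ℕ) → ℝ) : Prop :=
  ∀ π ∈ P0, powerFn ι n φ π ≤ α

/-- A test has size `α` if the supremum of its power over `P0` is `α`. -/
def HasSize (ι : Type) [Fintype ι] [DecidableEq ι] (n : ℕ) (P0 : Set (ι → ℝ)) (α : ℝ)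
    (φ : (ι → ℕ) → ℝ) : Prop :=
  IsLUB (powerFn ι n φ '' P0) α

/-- Uniformly most powerful unbiased level-`α` test. -/
def IsUMPU (ι : Type) [Fintype ι] [DecidableEq ι] (n : ℕ) (P0 : Set (ι → ℝ)) (α : ℝ)
    (φ : (ι → ℕ) → ℝ) : Prop :=
  IsLevel ι n P0 α φ ∧ Unbiased ι n P0 φ ∧
    ∀ ψ, IsTest ι n ψ → IsLevel ι n P0 α ψ → Unbiased ι n P0 ψ →
      ∀ πA ∈ probSimplex ι \ P0, powerFn ι n ψ πA ≤ powerFn ι n φ πA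

lemma countVecs_mem {k n : ℕ} (x : Fin k → ℕ) :
    x ∈ countVecs (Fin k) n ↔ ∑ i, x i = n := by
  simp only [countVecs, Finset.mem_filter, Fintype.mem_piFinset, Finset.mem_range]
  constructor
  · exact fun h => h.2
  · intro h
    refine ⟨fun i => ?_, h⟩
    have := Finset.single_le_sum (f := x) (fun _ _ => Nat.zero_le _) (Finset.mem_univ i)
    omega

lemma powerFn_const {k n : ℕ} (c : ℝ) (π : Fin k → ℝ) (hπ : π ∈ probSimplex (Fin k)) :
    powerFn (Fin k) n (fun _ => c) π = c := by
  have h : countVecs (Fin k) n = Finset.piAntidiag Finset.univ n := by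
    ext x
    simp [countVecs_mem]
  have h2 := Finset.sum_pow_eq_sum_piAntidiag Finset.univ π n
  rw [hπ.2, one_pow, ← h] at h2
  unfold powerFn
  simp_rw [mul_assoc]
  rw [← Finset.mul_sum, ← h2, mul_one]

lemma powerFn_affine {k n : ℕ} (c e : ℝ) (φ : (Fin k → ℕ) → ℝ) (π : Fin k → ℝ)
    (hπ : π ∈ probSimplex (Fin k)) :
    powerFn (Fin k) n (fun x => c + e * φ x) π = c + e * powerFn (Fin k) n φ π := by
  have h := powerFn_const (n := n) c π hπ
  rw [← h]
  unfold powerFn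
  rw [Finset.mul_sum, ← Finset.sum_add_distrib]
  refine Finset.sum_congr rfl fun x _ => ?_
  have := h
  unfold powerFn at this
  rw [this]
  ring

lemma powerFn_poly (k n : ℕ) (φ : (Fin k → ℕ) → ℝ) :
    ∃ B : MvPolynomial (Fin k) ℝ, B.totalDegree ≤ n ∧
      ∀ π, MvPolynomial.eval π B = powerFn (Fin k) n φ π := by
  refine ⟨∑ x ∈ countVecs (Fin k) n, MvPolynomial.monomial (Finsupp.equivFunOnFinite.symm x)
    (φ x * (Nat.multinomial Finset.univ x : ℝ)), ?_, ?_⟩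
  · refine MvPolynomial.totalDegree_finsetSum_le fun x hx => ?_
    refine (MvPolynomial.totalDegree_monomial_le _ _).trans ?_
    rw [Finsupp.sum_fintype _ _ (fun _ => rfl)]
    rw [countVecs_mem] at hx
    simp [hx]
  · intro π
    simp only [map_sum, MvPolynomial.eval_monomial, powerFn]
    refine Finset.sum_congr rfl fun x _ => ?_
    rw [Finsupp.prod_fintype _ _ (fun _ => pow_zero _)]
    simp

lemma poly_powerFn (k n : ℕ) (β : MvPolynomial (Fin k) ℝ) (hβ : β.totalDegree ≤ n) :
    ∃ φ : (Fin k → ℕ) → ℝ, ∀ π ∈ probSimplex (Fin k),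
      MvPolynomial.eval π β = powerFn (Fin k) n φ π := by
  set S : MvPolynomial (Fin k) ℝ := ∑ i, MvPolynomial.X i with hS
  have hSh : S.IsHomogeneous 1 :=
    MvPolynomial.IsHomogeneous.sum _ _ _ fun i _ => MvPolynomial.isHomogeneous_X _ _
  set H : MvPolynomial (Fin k) ℝ := ∑ d ∈ Finset.range (β.totalDegree + 1),
    MvPolynomial.homogeneousComponent d β * S ^ (n - d) with hH
  have hHh : H.IsHomogeneous n := by
    refine MvPolynomial.IsHomogeneous.sum _ _ _ fun d hd => ?_
    have h1 := (MvPolynomial.homogeneousComponent_isHomogeneous d β).mul (hSh.pow (n - d))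
    rw [Finset.mem_range] at hd
    have : d + 1 * (n - d) = n := by omega
    rwa [this] at h1
  have hev : ∀ π ∈ probSimplex (Fin k), MvPolynomial.eval π H = MvPolynomial.eval π β := by
    intro π hπ
    have hs : MvPolynomial.eval π S = 1 := by simp [hS, hπ.2]
    conv_rhs => rw [← MvPolynomial.sum_homogeneousComponent β]
    simp [hH, hs]
  refine ⟨fun x => H.coeff (Finsupp.equivFunOnFinite.symm x) /
    (Nat.multinomial Finset.univ x : ℝ), fun π hπ => ?_⟩
  rw [← hev π hπ, MvPolynomial.eval_eq']
  unfold powerFn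
  have h1 : ∀ x : Fin k → ℕ, H.coeff (Finsupp.equivFunOnFinite.symm x) /
    (Nat.multinomial Finset.univ x : ℝ) * (Nat.multinomial Finset.univ x : ℝ)
      = H.coeff (Finsupp.equivFunOnFinite.symm x) := fun x =>
    div_mul_cancel₀ _ (by exact_mod_cast (Nat.multinomial_pos _ _).ne')
  simp_rw [h1]
  refine Finset.sum_of_injOn (fun d => ⇑d) (fun a _ b _ h => DFunLike.coe_injective h) ?_ ?_ ?_
  · intro d hd
    have hd' : MvPolynomial.coeff d H ≠ 0 := by simpa using hd
    have : d.degree = n := by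
      by_contra hne
      exact hd' (hHh.coeff_eq_zero hne)
    simp only [Finset.mem_coe, countVecs_mem]
    rw [← this, Finsupp.degree_eq_sum]
  · intro x _ hx
    have : MvPolynomial.coeff (Finsupp.equivFunOnFinite.symm x) H = 0 := by
      by_contra hne
      exact hx ⟨Finsupp.equivFunOnFinite.symm x, by simpa using hne, by simp⟩
    rw [this, zero_mul]
  · intro d _
    simp

lemma approx {k : ℕ} (B g : MvPolynomial (Fin k) ℝ) (c : ℝ) (p q : Fin k → ℝ)
    (hp : p ∈ probSimplex (Fin k)) (hq : q ∈ probSimplex (Fin k))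
    (hg : MvPolynomial.eval q g ≠ 0)
    (h : ∀ r ∈ probSimplex (Fin k), MvPolynomial.eval r g ≠ 0 → c ≤ MvPolynomial.eval r B) :
    c ≤ MvPolynomial.eval p B := by
  let L : ℝ → Fin k → ℝ := fun t i => p i + t * (q i - p i)
  let P : Polynomial ℝ := MvPolynomial.aeval
    (fun i => Polynomial.C (p i) + Polynomial.X * Polynomial.C (q i - p i)) g
  have hP : ∀ t, P.eval t = MvPolynomial.eval (L t) g := by
    intro t
    have := MvPolynomial.map_aeval
      (fun i => Polynomial.C (p i) + Polynomial.X * Polynomial.C (q i - p i))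
      (Polynomial.evalRingHom t) g
    simp only [Polynomial.coe_evalRingHom] at this
    rw [show P.eval t = _ from this, MvPolynomial.coe_eval₂Hom, MvPolynomial.eval,
      MvPolynomial.coe_eval₂Hom]
    congr 1
    · ext x; simp
    · funext i
      simp [L]
  have hL1 : L 1 = q := by funext i; simp [L]
  have hL0 : L 0 = p := by funext i; simp [L]
  have hP0 : P ≠ 0 := by
    intro h0
    apply hg
    rw [← hL1, ← hP, h0, Polynomial.eval_zero]
  have hcont : Continuous fun t => MvPolynomial.eval (L t) B := by
    have hL : Continuous L := by fun_prop
    exact (MvPolynomial.continuous_eval B).comp hL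
  have ht : Filter.Tendsto (fun t => MvPolynomial.eval (L t) B) (nhdsWithin 0 (Set.Ioi 0))
      (nhds (MvPolynomial.eval p B)) := by
    have := hcont.tendsto 0
    rw [hL0] at this
    exact this.mono_left nhdsWithin_le_nhds
  refine ge_of_tendsto ht ?_
  have hfin : (((P.roots.toFinset : Set ℝ)) \ {0}).Finite :=
    (Finset.finite_toSet _).subset Set.diff_subset
  have hnhd : ((((P.roots.toFinset : Set ℝ)) \ {0})ᶜ) ∈ nhds (0:ℝ) :=
    hfin.isClosed.isOpen_compl.mem_nhds (by simp)
  filter_upwards [nhdsWithin_le_nhds hnhd, self_mem_nhdsWithin,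
    nhdsWithin_le_nhds (Iio_mem_nhds (zero_lt_one (α := ℝ)))] with t h1 h2 h3
  simp only [Set.mem_Ioi] at h2
  simp only [Set.mem_Iio] at h3
  refine h _ ⟨fun i => ?_, ?_⟩ ?_
  · have a := hp.1 i
    have b := hq.1 i
    have : L t i = (1 - t) * p i + t * q i := by simp only [L]; ring
    rw [this]
    have : 0 ≤ 1 - t := by linarith
    positivity
  · simp only [L, Finset.sum_add_distrib, ← Finset.mul_sum, Finset.sum_sub_distrib, hp.2, hq.2]
    ring
  · rw [← hP]
    intro h0
    apply h1
    refine ⟨?_, h2.ne'⟩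
    simp [hP0, h0]

lemma exists_test (k n : ℕ) (β : MvPolynomial (Fin k) ℝ) (hβ : β.totalDegree ≤ n) :
    ∃ φ : (Fin k → ℕ) → ℝ, IsTest (Fin k) n φ ∧ ∃ e : ℝ, 0 < e ∧ ∀ π ∈ probSimplex (Fin k),
      powerFn (Fin k) n φ π = 1 / 2 + e * MvPolynomial.eval π β := by
  obtain ⟨ψ, hψ⟩ := poly_powerFn k n β hβ
  set M : ℝ := 1 + ∑ x ∈ countVecs (Fin k) n, |ψ x| with hM
  have hM0 : 0 < M := by
    have : 0 ≤ ∑ x ∈ countVecs (Fin k) n, |ψ x| := Finset.sum_nonneg fun _ _ => abs_nonneg _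
    linarith
  refine ⟨fun x => 1 / 2 + (1 / (2 * M)) * ψ x, ?_, 1 / (2 * M), by positivity, ?_⟩
  · intro x hx
    have h1 : |ψ x| ≤ M := by
      have := Finset.single_le_sum (f := fun x => |ψ x|) (fun _ _ => abs_nonneg _) hx
      linarith
    have h2 := abs_le.1 h1
    have h3 : 1 / (2 * M) * ψ x = (1 / 2) * (ψ x / M) := by field_simp
    have h4 : ψ x / M ≤ 1 := by rw [div_le_one hM0]; exact h2.2
    have h5 : -1 ≤ ψ x / M := by rw [le_div_iff₀ hM0]; linarith
    simp only [h3]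
    constructor <;> linarith
  · intro π hπ
    rw [powerFn_affine _ _ _ _ hπ, hψ π hπ]

/-- existence criteria for NTUB and SUB tests of an algebraic null hypothesis. -/
theorem stmt_6 (k n : ℕ) (hk : 2 ≤ k) (hn : 1 ≤ n)
    (G : Set (MvPolynomial (Fin k) ℝ))
    (P0 : Set (Fin k → ℝ))
    (hP0 : P0 = probSimplex (Fin k) ∩ {π | ∀ g ∈ G, MvPolynomial.eval π g = 0})
    (hne : P0.Nonempty) (hneq : P0 ≠ probSimplex (Fin k)) :
    ((∃ φ, IsTest (Fin k) n φ ∧ IsNTUB (Fin k) n P0 φ) ↔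
      ∃ β : MvPolynomial (Fin k) ℝ, β.totalDegree ≤ n ∧
        (∃ π ∈ probSimplex (Fin k), MvPolynomial.eval π β ≠ 0) ∧
        (∀ π ∈ P0, MvPolynomial.eval π β = 0) ∧
        (∀ π ∈ probSimplex (Fin k) \ P0, 0 ≤ MvPolynomial.eval π β)) ∧
    ((∃ φ, IsTest (Fin k) n φ ∧ IsSUB (Fin k) n P0 φ) ↔
      ∃ β : MvPolynomial (Fin k) ℝ, β.totalDegree ≤ n ∧
        (∃ π ∈ probSimplex (Fin k), MvPolynomial.eval π β ≠ 0) ∧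
        (∀ π ∈ P0, MvPolynomial.eval π β = 0) ∧
        (∀ π ∈ probSimplex (Fin k) \ P0, 0 < MvPolynomial.eval π β)) := by
  have hsub : ∀ π ∈ P0, π ∈ probSimplex (Fin k) := fun π h => by rw [hP0] at h; exact h.1
  obtain ⟨qA, hqA⟩ : (probSimplex (Fin k) \ P0).Nonempty := by
    rw [Set.diff_nonempty]
    intro h
    exact hneq (Set.Subset.antisymm hsub h)
  obtain ⟨g, hgG, hgq⟩ : ∃ g ∈ G, MvPolynomial.eval qA g ≠ 0 := by
    by_contra hcon
    push Not at hcon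
    apply hqA.2
    rw [hP0]
    exact ⟨hqA.1, hcon⟩
  have hA : ∀ r ∈ probSimplex (Fin k), MvPolynomial.eval r g ≠ 0 →
      r ∈ probSimplex (Fin k) \ P0 := by
    intro r hr hrg
    refine ⟨hr, fun h => ?_⟩
    rw [hP0] at h
    exact hrg (h.2 g hgG)
  obtain ⟨p0, hp0⟩ := hne
  have key : ∀ φ, Unbiased (Fin k) n P0 φ → ∃ β : MvPolynomial (Fin k) ℝ,
      β.totalDegree ≤ n ∧
      (∀ π, MvPolynomial.eval π β = powerFn (Fin k) n φ π - powerFn (Fin k) n φ p0) ∧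
      (∀ π ∈ P0, MvPolynomial.eval π β = 0) := by
    intro φ hφ
    obtain ⟨B, hB, hBe⟩ := powerFn_poly k n φ
    have hle : ∀ a ∈ P0, ∀ b ∈ P0, powerFn (Fin k) n φ a ≤ powerFn (Fin k) n φ b := by
      intro a ha b hb
      rw [← hBe b]
      refine approx B g _ b qA (hsub b hb) hqA.1 hgq fun r hr hrg => ?_
      rw [hBe]
      exact hφ a ha r (hA r hr hrg)
    refine ⟨B - MvPolynomial.C (powerFn (Fin k) n φ p0), ?_, ?_, ?_⟩
    · exact (MvPolynomial.totalDegree_sub_C_le _ _).trans hB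
    · intro π
      simp [hBe]
    · intro π hπ
      simp only [map_sub, hBe, MvPolynomial.eval_C]
      rw [sub_eq_zero]
      exact le_antisymm (hle _ hπ _ hp0) (hle _ hp0 _ hπ)
  refine ⟨⟨?_, ?_⟩, ⟨?_, ?_⟩⟩
  · rintro ⟨φ, -, hub, a, ha, b, hb, hab⟩
    obtain ⟨β, hd, he, hz⟩ := key φ hub
    refine ⟨β, hd, ?_, hz, ?_⟩
    · by_contra hcon
      push Not at hcon
      have h1 := hcon a ha
      have h2 := hcon b hb
      rw [he] at h1 h2
      apply hab
      linarith
    · intro π hπ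
      rw [he]
      linarith [hub p0 hp0 π hπ]
  · rintro ⟨β, hd, ⟨a, ha, hne0⟩, hz, hpos⟩
    obtain ⟨φ, ht, e, he, hφ⟩ := exists_test k n β hd
    refine ⟨φ, ht, ?_, a, ha, p0, hsub _ hp0, ?_⟩
    · intro x hx y hy
      rw [hφ x (hsub x hx), hφ y hy.1, hz x hx]
      have := mul_nonneg he.le (hpos y hy)
      linarith
    · rw [hφ a ha, hφ p0 (hsub _ hp0), hz p0 hp0]
      have := mul_ne_zero he.ne' hne0
      intro h
      apply this
      linarith
  · rintro ⟨φ, -, hsb⟩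
    obtain ⟨β, hd, he, hz⟩ := key φ (fun a ha b hb => (hsb a ha b hb).le)
    have hpos : ∀ π ∈ probSimplex (Fin k) \ P0, 0 < MvPolynomial.eval π β := by
      intro π hπ
      rw [he]
      linarith [hsb p0 hp0 π hπ]
    exact ⟨β, hd, ⟨qA, hqA.1, (hpos qA hqA).ne'⟩, hz, hpos⟩
  · rintro ⟨β, hd, -, hz, hpos⟩
    obtain ⟨φ, ht, e, he, hφ⟩ := exists_test k n β hd
    refine ⟨φ, ht, ?_⟩
    intro x hx y hy
    rw [hφ x (hsub x hx), hφ y hy.1, hz x hx]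
    have := mul_pos he (hpos y hy)
    linarith
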